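/- arXiv:2010.08434 — 2 statements merged into one kernel-verified Lean document; each statement's English description precedes it below -/
import Mathlib

section
/- Let n ≥ 2 and define u(z) = ‖z'‖^{2(1−1/n)}(1 + |z₁|²) for z = (z₁, z') ∈ ℂ × ℂ^{n−1}. Then at every point z with z' ≠ 0, u is smooth and the complex Hessian matrix (∂²u/∂z_i∂z̄_j) is positive definite, and its determinant equals (1 − 1/n)^n (1 + |z₁|²)^{n−2}. -/
/-!
Put `α = 1 - 1/n`, `s = ‖z'‖²`, `c = 1 + |z₁|²`, so that `u = s ^ α * c`, and write `p` for `z` with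
its first coordinate replaced by `0`. Differentiating twice (`cHess_model`) gives

* `H₁₁ = s ^ α`, `H_{i1} = α s ^ (α-1) conj(p_i) z₁` for `i ≠ 1`,
* `H_{ij} = α c (s ^ (α-1) δ_{ij} + (α-1) s ^ (α-2) conj(p_i) p_j)` for `i, j ≠ 1`.

Eliminating the first row and column (a Schur complement) writes `H = L B Lᴴ`, where `L` is the
identity plus a first column `v` with `v₁ = 0`, hence `det L = 1`, and `B` is a real diagonal matrix
plus the rank-one matrix `b conj(p) pᵀ`, with `b = α (α - c) s ^ (α-2) < 0` (`cHess_factor`).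

The diagonal entries of `B` are `s ^ α` and, `n - 1` times, `a = α c s ^ (α-1)`. In the direction of `conj(p)`
the negative rank-one term lowers `a` to `a + b s = α² s ^ (α-1) > 0`, so `B` is positive definite by
Cauchy-Schwarz (`posDef_diagRankOne`). The matrix determinant lemma (`det_diagRankOne`) gives
`det B = s ^ α a ^ (n-1) (α / c)`, in which the exponent of `s` is `α + (α-1)(n-1) = 0` precisely
because `α = 1 - 1/n` (`det_value`).
-/

open Complex

/-- Wirtinger derivative `∂u/∂z_j`, via the real Fréchet derivative. -/
noncomputable def wd {n : ℕ} (j : Fin n) (u : (Fin n → ℂ) → ℂ) (z : Fin n → ℂ) : ℂ :=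
  (1 / 2) * (fderiv ℝ u z (Pi.single j 1) - Complex.I * fderiv ℝ u z (Pi.single j Complex.I))

/-- Conjugate Wirtinger derivative `∂u/∂z̄_j`. -/
noncomputable def wdbar {n : ℕ} (j : Fin n) (u : (Fin n → ℂ) → ℂ) (z : Fin n → ℂ) : ℂ :=
  (1 / 2) * (fderiv ℝ u z (Pi.single j 1) + Complex.I * fderiv ℝ u z (Pi.single j Complex.I))

/-- Complex Hessian `(∂²u/∂z_i∂z̄_j)_{i,j}`. -/
noncomputable def cHess {n : ℕ} (u : (Fin n → ℂ) → ℂ) (z : Fin n → ℂ) :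
    Matrix (Fin n) (Fin n) ℂ :=
  Matrix.of fun i j => wd i (fun w => wdbar j u w) z

/-- Squared Euclidean norm of `z' = (z_2, …, z_n)`. -/
noncomputable def nsq' {n : ℕ} (z : Fin n → ℂ) : ℝ :=
  ∑ j ∈ Finset.univ.filter (fun j : Fin n => (j : ℕ) ≠ 0), Complex.normSq (z j)

/-! ### Wirtinger calculus -/

theorem hasFDerivAt_normSq {n : ℕ} (k : Fin n) (w : Fin n → ℂ) :
    HasFDerivAt (fun w : Fin n → ℂ => normSq (w k))
      ((2 * (w k).re) • (reCLM.comp (ContinuousLinearMap.proj (R := ℝ) (φ := fun _ : Fin n => ℂ) k)) +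
       (2 * (w k).im) • (imCLM.comp (ContinuousLinearMap.proj (R := ℝ) (φ := fun _ : Fin n => ℂ) k))) w := by
  have h1 : HasFDerivAt (fun w : Fin n → ℂ => (w k).re) (reCLM.comp (ContinuousLinearMap.proj (R := ℝ) (φ := fun _ : Fin n => ℂ) k)) w :=
    (reCLM.comp (ContinuousLinearMap.proj (R := ℝ) (φ := fun _ : Fin n => ℂ) k)).hasFDerivAt
  have h2 : HasFDerivAt (fun w : Fin n → ℂ => (w k).im) (imCLM.comp (ContinuousLinearMap.proj (R := ℝ) (φ := fun _ : Fin n => ℂ) k)) w :=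
    (imCLM.comp (ContinuousLinearMap.proj (R := ℝ) (φ := fun _ : Fin n => ℂ) k)).hasFDerivAt
  simp only [normSq_apply]
  refine ((h1.fun_mul h1).fun_add (h2.fun_mul h2)).congr_fderiv ?_
  module

/-- The coefficient that is `0` on the first coordinate and `1` on the coordinates of `z'`. -/
noncomputable def tail {n : ℕ} (j : Fin n) : ℂ := if (j : ℕ) = 0 then 0 else 1

theorem wd_mul {n : ℕ} (j : Fin n) {f g : (Fin n → ℂ) → ℂ} {z : Fin n → ℂ}
    (hf : DifferentiableAt ℝ f z) (hg : DifferentiableAt ℝ g z) :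
    wd j (fun w => f w * g w) z = wd j f z * g z + f z * wd j g z := by
  simp only [wd, fderiv_fun_mul hf hg]
  simp
  ring

theorem wdbar_mul {n : ℕ} (j : Fin n) {f g : (Fin n → ℂ) → ℂ} {z : Fin n → ℂ}
    (hf : DifferentiableAt ℝ f z) (hg : DifferentiableAt ℝ g z) :
    wdbar j (fun w => f w * g w) z = wdbar j f z * g z + f z * wdbar j g z := by
  simp only [wdbar, fderiv_fun_mul hf hg]
  simp
  ring

theorem wd_add {n : ℕ} (j : Fin n) {f g : (Fin n → ℂ) → ℂ} {z : Fin n → ℂ}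
    (hf : DifferentiableAt ℝ f z) (hg : DifferentiableAt ℝ g z) :
    wd j (fun w => f w + g w) z = wd j f z + wd j g z := by
  simp only [wd, fderiv_fun_add hf hg]
  simp
  ring

theorem wd_const {n : ℕ} (j : Fin n) (c : ℂ) (z : Fin n → ℂ) : wd j (fun _ => c) z = 0 := by
  simp [wd]

theorem wd_coord {n : ℕ} (j k : Fin n) (z : Fin n → ℂ) :
    wd j (fun w => w k) z = if k = j then 1 else 0 := by
  have h : fderiv ℝ (fun w : Fin n → ℂ => w k) z =
      ContinuousLinearMap.proj (R := ℝ) (φ := fun _ : Fin n => ℂ) k :=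
    (ContinuousLinearMap.proj (R := ℝ) (φ := fun _ : Fin n => ℂ) k).fderiv
  simp only [wd, h, ContinuousLinearMap.proj_apply, Pi.single_apply]
  split_ifs
  · rw [I_mul_I]; norm_num
  · simp

theorem hasFDerivAt_nsq {n : ℕ} (w : Fin n → ℂ) :
    HasFDerivAt (fun w : Fin n → ℂ => nsq' w)
      (∑ k ∈ Finset.univ.filter (fun j : Fin n => (j : ℕ) ≠ 0),
      ((2 * (w k).re) • (reCLM.comp (ContinuousLinearMap.proj (R := ℝ) (φ := fun _ : Fin n => ℂ) k)) +
       (2 * (w k).im) • (imCLM.comp (ContinuousLinearMap.proj (R := ℝ) (φ := fun _ : Fin n => ℂ) k)))) w := by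
  unfold nsq'
  exact HasFDerivAt.fun_sum fun k _ => hasFDerivAt_normSq k w

theorem fderiv_nsq {n : ℕ} (w : Fin n → ℂ) (j : Fin n) (a : ℂ) :
    fderiv ℝ (fun w : Fin n → ℂ => nsq' w) w (Pi.single j a) =
      if (j : ℕ) = 0 then 0 else 2 * ((w j).re * a.re + (w j).im * a.im) := by
  rw [(hasFDerivAt_nsq w).fderiv, sum_apply, Finset.sum_filter, Finset.sum_eq_single j]
  · by_cases h : (j : ℕ) = 0
    · simp [h]
    · simp [h]; ring
  · intro k _ hk
    simp [hk]
  · simp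

theorem fderiv_ofReal {n : ℕ} {f : (Fin n → ℂ) → ℝ} {z : Fin n → ℂ}
    (hf : DifferentiableAt ℝ f z) (v : Fin n → ℂ) :
    fderiv ℝ (fun w => (f w : ℂ)) z v = (fderiv ℝ f z v : ℝ) := by
  have := (ofRealCLM.hasFDerivAt.comp z hf.hasFDerivAt).fderiv
  have h2 : (fun w => (f w : ℂ)) = ofRealCLM ∘ f := rfl
  rw [h2, this]; rfl

theorem fderiv_pow_nsq {n : ℕ} (β : ℝ) (w : Fin n → ℂ) (hw : 0 < nsq' w) (v : Fin n → ℂ) :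
    fderiv ℝ (fun w : Fin n → ℂ => nsq' w ^ β) w v =
      β * nsq' w ^ (β - 1) * fderiv ℝ (fun w : Fin n → ℂ => nsq' w) w v := by
  have := ((hasFDerivAt_nsq w).differentiableAt.hasFDerivAt.rpow_const (p := β) (Or.inl hw.ne')).fderiv
  rw [this]; simp

theorem diff_pow {n : ℕ} (β : ℝ) (w : Fin n → ℂ) (hw : 0 < nsq' w) :
    DifferentiableAt ℝ (fun w : Fin n → ℂ => nsq' w ^ β) w :=
  (hasFDerivAt_nsq w).differentiableAt.rpow_const (Or.inl hw.ne')

theorem diff_ofReal {n : ℕ} {f : (Fin n → ℂ) → ℝ} {z : Fin n → ℂ}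
    (hf : DifferentiableAt ℝ f z) : DifferentiableAt ℝ (fun w => (f w : ℂ)) z :=
  ofRealCLM.differentiableAt.comp z hf

theorem wd_pow {n : ℕ} (j : Fin n) (β : ℝ) (w : Fin n → ℂ) (hw : 0 < nsq' w) :
    wd j (fun w => ((nsq' w ^ β : ℝ) : ℂ)) w =
      β * (nsq' w ^ (β - 1) : ℝ) * (tail j * (starRingEnd ℂ) (w j)) := by
  simp only [wd, fderiv_ofReal (diff_pow β w hw), fderiv_pow_nsq β w hw, fderiv_nsq, tail]
  split_ifs
  · simp
  · apply Complex.ext <;> simp <;> ring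

theorem wdbar_pow {n : ℕ} (j : Fin n) (β : ℝ) (w : Fin n → ℂ) (hw : 0 < nsq' w) :
    wdbar j (fun w => ((nsq' w ^ β : ℝ) : ℂ)) w =
      β * (nsq' w ^ (β - 1) : ℝ) * (tail j * w j) := by
  simp only [wdbar, fderiv_ofReal (diff_pow β w hw), fderiv_pow_nsq β w hw, fderiv_nsq, tail]
  split_ifs
  · simp
  · apply Complex.ext <;> simp <;> ring

theorem diff_one_add {n : ℕ} (k : Fin n) (w : Fin n → ℂ) :
    DifferentiableAt ℝ (fun w : Fin n → ℂ => 1 + normSq (w k)) w :=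
  (hasFDerivAt_normSq k w).differentiableAt.const_add 1

theorem fderiv_one_add {n : ℕ} (k j : Fin n) (w : Fin n → ℂ) (a : ℂ) :
    fderiv ℝ (fun w : Fin n → ℂ => 1 + normSq (w k)) w (Pi.single j a) =
      if k = j then 2 * ((w k).re * a.re + (w k).im * a.im) else 0 := by
  rw [((hasFDerivAt_normSq k w).const_add 1).fderiv]
  by_cases h : k = j
  · subst h; simp; ring
  · simp [h]

theorem wd_one_add {n : ℕ} (k j : Fin n) (w : Fin n → ℂ) :
    wd j (fun w => ((1 + normSq (w k) : ℝ) : ℂ)) w =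
      (if k = j then 1 else 0) * (starRingEnd ℂ) (w k) := by
  simp only [wd, fderiv_ofReal (diff_one_add k w), fderiv_one_add]
  split_ifs
  · apply Complex.ext <;> simp
  · simp

theorem wdbar_one_add {n : ℕ} (k j : Fin n) (w : Fin n → ℂ) :
    wdbar j (fun w => ((1 + normSq (w k) : ℝ) : ℂ)) w = (if k = j then 1 else 0) * w k := by
  simp only [wdbar, fderiv_ofReal (diff_one_add k w), fderiv_one_add]
  split_ifs
  · apply Complex.ext <;> simp
  · simp

/-! ### The complex Hessian of the model function -/

/-- First derivatives of `s ^ α * c`, for all `j` at once: the first summand is present only for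
`j ≠ o`, the second only for `j = o`, when `o` is the first coordinate. -/
theorem wdbar_model {n : ℕ} (o : Fin n) (α : ℝ) (j : Fin n) (w : Fin n → ℂ) (hw : 0 < nsq' w) :
    wdbar j (fun w => ((nsq' w ^ α * (1 + normSq (w o)) : ℝ) : ℂ)) w =
      α * tail j * ((nsq' w ^ (α - 1) : ℝ) * (w j * (1 + normSq (w o) : ℝ)))
        + (if o = j then 1 else 0) * ((nsq' w ^ α : ℝ) * w o) := by
  simp only [ofReal_mul]
  rw [wdbar_mul j (diff_ofReal (diff_pow α w hw)) (diff_ofReal (diff_one_add o w)),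
    wdbar_pow j α w hw, wdbar_one_add]
  ring

theorem diff_coord {n : ℕ} (k : Fin n) (w : Fin n → ℂ) :
    DifferentiableAt ℝ (fun w : Fin n → ℂ => w k) w := by fun_prop

theorem nsq_continuous {n : ℕ} : Continuous (fun w : Fin n → ℂ => nsq' w) :=
  continuous_iff_continuousAt.2 fun w => (hasFDerivAt_nsq w).continuousAt

/-- Every entry of the Hessian in one formula; `tail` and the Kronecker deltas switch off the terms
that do not belong to the block containing `(i, j)`. -/
theorem cHess_model {n : ℕ} (o : Fin n) (α : ℝ) (z : Fin n → ℂ) (hz : 0 < nsq' z) (i j : Fin n) :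
    cHess (fun w => ((nsq' w ^ α * (1 + normSq (w o)) : ℝ) : ℂ)) z i j =
      α * tail j * (((α - 1 : ℝ) : ℂ) * (nsq' z ^ (α - 2) : ℝ) *
          (tail i * (starRingEnd ℂ) (z i)) * z j * (1 + normSq (z o) : ℝ)
        + (nsq' z ^ (α - 1) : ℝ) * ((if j = i then 1 else 0) * (1 + normSq (z o) : ℝ)
          + z j * ((if o = i then 1 else 0) * (starRingEnd ℂ) (z o))))
      + (if o = j then 1 else 0) * (α * (nsq' z ^ (α - 1) : ℝ) *
          (tail i * (starRingEnd ℂ) (z i)) * z o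
        + (nsq' z ^ α : ℝ) * (if o = i then 1 else 0)) := by
  -- `s ^ (α - 1)` is singular on `z' = 0`, so the first-derivative formula holds only near `z`.
  have hev : (fun w => wdbar j (fun w => ((nsq' w ^ α * (1 + normSq (w o)) : ℝ) : ℂ)) w) =ᶠ[nhds z]
      fun w => α * tail j * ((nsq' w ^ (α - 1) : ℝ) * (w j * (1 + normSq (w o) : ℝ)))
        + (if o = j then 1 else 0) * ((nsq' w ^ α : ℝ) * w o) := by
    filter_upwards [nsq_continuous.continuousAt.eventually (lt_mem_nhds hz)] with w hw
    exact wdbar_model o α j w hw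
  have hP := fun β => diff_ofReal (diff_pow β z hz)
  have hC := diff_ofReal (diff_one_add o z)
  have h1 := (diff_coord j z).fun_mul hC
  have h2 := (hP (α - 1)).fun_mul h1
  have h3 := (hP α).fun_mul (diff_coord o z)
  simp only [cHess, Matrix.of_apply]
  rw [wd, hev.fderiv_eq, ← wd]
  rw [wd_add i (h2.const_mul _) (h3.const_mul _), wd_mul i (differentiableAt_const _) h2,
    wd_mul i (differentiableAt_const _) h3, wd_mul i (hP (α - 1)) h1,
    wd_mul i (diff_coord j z) hC, wd_mul i (hP α) (diff_coord o z), wd_pow _ _ _ hz,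
    wd_pow _ _ _ hz, wd_one_add, wd_coord, wd_coord, wd_const, wd_const]
  rw [show α - 1 - 1 = α - 2 by ring]
  ring

/-! ### Diagonal plus rank-one matrices -/

section LinearAlgebra

variable {n : ℕ}

/-- The matrix `diag(d) + b conj(p) pᵀ`. -/
noncomputable def diagRankOne (d : Fin n → ℝ) (b : ℝ) (p : Fin n → ℂ) : Matrix (Fin n) (Fin n) ℂ :=
  Matrix.of fun i j => (if i = j then (d i : ℂ) else 0) + b * (starRingEnd ℂ (p i) * p j)

/-- The identity matrix with the vector `v` added to column `o`. -/
noncomputable def shear (o : Fin n) (v : Fin n → ℂ) : Matrix (Fin n) (Fin n) ℂ :=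
  Matrix.of fun i j => (if i = j then 1 else 0) + v i * (if j = o then 1 else 0)

theorem det_shear (o : Fin n) (v : Fin n → ℂ) (hv : v o = 0) : (shear o v).det = 1 := by
  have h : shear o v = 1 + Matrix.replicateCol Unit v * Matrix.replicateRow Unit (Pi.single o (1 : ℂ)) := by
    ext i j
    simp [shear, Matrix.mul_apply, Matrix.one_apply, Pi.single_apply]
  rw [h, Matrix.det_one_add_replicateCol_mul_replicateRow]
  simp [hv]

/-- The matrix determinant lemma for `diag(d) + b conj(p) pᵀ`. -/
theorem det_diagRankOne (d : Fin n → ℝ) (b : ℝ) (p : Fin n → ℂ) (hd : ∀ i, d i ≠ 0) :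
    (diagRankOne d b p).det = ((∏ i, d i) * (1 + b * ∑ i, normSq (p i) / d i) : ℝ) := by
  have h : diagRankOne d b p = Matrix.diagonal (fun i => (d i : ℂ)) +
      Matrix.replicateCol Unit (fun i => b * starRingEnd ℂ (p i)) * Matrix.replicateRow Unit p := by
    ext i j
    simp [diagRankOne, Matrix.mul_apply, Matrix.diagonal_apply, mul_assoc]
  have hu : IsUnit (Matrix.diagonal (fun i => (d i : ℂ))).det := by
    rw [Matrix.det_diagonal, isUnit_iff_ne_zero, Finset.prod_ne_zero_iff]
    exact fun i _ => ofReal_ne_zero.2 (hd i)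
  have hinv : (Matrix.diagonal (fun i => (d i : ℂ)))⁻¹ = Matrix.diagonal (fun i => (d i : ℂ)⁻¹) := by
    apply Matrix.inv_eq_right_inv
    rw [Matrix.diagonal_mul_diagonal, ← Matrix.diagonal_one]
    congr 1
    ext i
    exact mul_inv_cancel₀ (ofReal_ne_zero.2 (hd i))
  rw [h, Matrix.det_add_replicateCol_mul_replicateRow hu, hinv, Matrix.det_diagonal]
  simp only [ofReal_mul, ofReal_prod, ofReal_add, ofReal_one, ofReal_sum, ofReal_div,
    normSq_eq_conj_mul_self, Finset.mul_sum]
  congr 1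
  rw [Matrix.det_unique]
  simp only [Matrix.add_apply, Matrix.mul_apply, Matrix.replicateRow_apply,
    Matrix.replicateCol_apply, Matrix.one_apply_eq]
  congr 1
  refine Finset.sum_congr rfl fun i _ => ?_
  rw [Finset.sum_eq_single i (fun k _ hk => by simp [hk]) (by simp), Matrix.diagonal_apply_eq]
  ring

/-- Cauchy-Schwarz, using that the coordinate `o` of `p` vanishes. -/
theorem normSq_sum_le (o : Fin n) (p x : Fin n → ℂ) (hp : p o = 0) :
    normSq (∑ j, p j * x j) ≤
      (∑ i, normSq (p i)) * ∑ i, if i = o then 0 else normSq (x i) := by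
  have h1 : ‖∑ j, p j * x j‖ ≤ ∑ j, ‖p j‖ * (if j = o then 0 else ‖x j‖) := by
    refine (norm_sum_le _ _).trans (Finset.sum_le_sum fun j _ => ?_)
    split_ifs with h
    · simp [h, hp]
    · simp
  calc normSq (∑ j, p j * x j) = ‖∑ j, p j * x j‖ ^ 2 := normSq_eq_norm_sq _
    _ ≤ (∑ j, ‖p j‖ * (if j = o then 0 else ‖x j‖)) ^ 2 := by gcongr
    _ ≤ _ := Finset.sum_mul_sq_le_sq_mul_sq _ _ _
    _ = _ := by
      simp only [normSq_eq_norm_sq]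
      congr 1
      exact Finset.sum_congr rfl fun i _ => by split_ifs <;> simp

open scoped ComplexOrder in
/-- A nonpositive multiple `b` of the rank-one term lowers the quadratic form on the coordinates other
than `o` by at most `|b| ‖p‖²` and leaves coordinate `o` untouched. -/
theorem posDef_diagRankOne (o : Fin n) (d : Fin n → ℝ) (b : ℝ) (p : Fin n → ℂ) (hp : p o = 0)
    (hb : b ≤ 0) (ho : 0 < d o) (hd : ∀ i, i ≠ o → 0 < d i + b * ∑ k, normSq (p k)) :
    (diagRankOne d b p).PosDef := by
  refine Matrix.PosDef.of_dotProduct_mulVec_pos ?_ fun x hx => ?_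
  · ext i j
    by_cases h : i = j
    · subst h; simp [diagRankOne, mul_comm]
    · simp [diagRankOne, h, Ne.symm h, mul_comm]
  · have key : star x ⬝ᵥ (diagRankOne d b p).mulVec x =
        ((∑ i, d i * normSq (x i) + b * normSq (∑ j, p j * x j) : ℝ) : ℂ) := by
      have hB : (diagRankOne d b p).mulVec x =
          fun i => d i * x i + b * (starRingEnd ℂ (p i) * ∑ j, p j * x j) := by
        ext i
        simp [diagRankOne, Matrix.mulVec, dotProduct, add_mul, Finset.sum_add_distrib,
          Finset.mul_sum, mul_assoc]
      rw [hB]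
      simp only [dotProduct, ofReal_add, ofReal_sum, ofReal_mul, normSq_eq_conj_mul_self, mul_add,
        Finset.sum_add_distrib, Pi.star_apply, RCLike.star_def]
      congr 1
      · exact Finset.sum_congr rfl fun i _ => by ring
      · rw [map_sum, Finset.sum_mul, Finset.mul_sum]
        refine Finset.sum_congr rfl fun i _ => ?_
        rw [map_mul]
        ring
    rw [key]
    rw [← ofReal_zero, real_lt_real]
    set s := ∑ k, normSq (p k) with hs
    have hcs := mul_le_mul_of_nonpos_left (normSq_sum_le o p x hp) hb
    refine lt_of_lt_of_le ?_ (add_le_add_right hcs _)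
    rw [← hs, ← mul_assoc, Finset.mul_sum, ← Finset.sum_add_distrib]
    obtain ⟨k, hk⟩ := Function.ne_iff.1 hx
    have hc : ∀ i, d i * normSq (x i) + b * s * (if i = o then 0 else normSq (x i)) =
        (if i = o then d o else d i + b * s) * normSq (x i) := by
      intro i
      split_ifs with h
      · simp [h]
      · ring
    have hpos : ∀ i, 0 < (if i = o then d o else d i + b * s) := by
      intro i
      split_ifs with h
      · exact ho
      · exact hd i h
    simp only [hc]
    exact Finset.sum_pos' (fun i _ => mul_nonneg (hpos i).le (normSq_nonneg _))
      ⟨k, Finset.mem_univ _, mul_pos (hpos k) (normSq_pos.2 hk)⟩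

/-- Entries of the congruence `L B Lᴴ` by a shear `L`. -/
theorem shear_conj_apply (o : Fin n) (v : Fin n → ℂ) (B : Matrix (Fin n) (Fin n) ℂ) (i j : Fin n) :
    (shear o v * B * (shear o v).conjTranspose) i j =
      B i j + v i * B o j + (B i o + v i * B o o) * starRingEnd ℂ (v j) := by
  have h1 : ∀ k, (shear o v * B) i k = B i k + v i * B o k := by
    intro k
    simp [shear, Matrix.mul_apply, add_mul, Finset.sum_add_distrib]
  rw [Matrix.mul_apply]
  simp only [h1]
  simp [shear, mul_add, Finset.sum_add_distrib, apply_ite (starRingEnd ℂ)]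

end LinearAlgebra

/-! ### Factorization and determinant -/

theorem tail_zero {n : ℕ} {o : Fin n} (ho : (o : ℕ) = 0) : tail o = 0 := by simp [tail, ho]

theorem sum_normSq_tail {n : ℕ} (z : Fin n → ℂ) : ∑ i, normSq (tail i * z i) = nsq' z := by
  rw [nsq', Finset.sum_filter]
  refine Finset.sum_congr rfl fun i _ => ?_
  by_cases h : (i : ℕ) = 0 <;> simp [tail, h]

theorem nsq_pos {n : ℕ} {z : Fin n → ℂ} (hz : ∃ j : Fin n, (j : ℕ) ≠ 0 ∧ z j ≠ 0) : 0 < nsq' z := by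
  obtain ⟨j, hj, hzj⟩ := hz
  exact Finset.sum_pos' (fun i _ => normSq_nonneg _)
    ⟨j, by simp [hj], normSq_pos.2 hzj⟩

/-- The Hessian after elimination of the first row and column: `v_i = H_{i1} / H₁₁` is the shear, and
`b` collects the rank-one term of the lower block and of its Schur correction. -/
theorem cHess_factor {n : ℕ} (o : Fin n) (ho : (o : ℕ) = 0) (α : ℝ) (z : Fin n → ℂ)
    (hz : 0 < nsq' z) :
    cHess (fun w => ((nsq' w ^ α * (1 + normSq (w o)) : ℝ) : ℂ)) z =
      shear o (fun i => α / nsq' z * starRingEnd ℂ (tail i * z i) * z o) *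
        diagRankOne
          (fun i => if i = o then nsq' z ^ α else α * (1 + normSq (z o)) * nsq' z ^ (α - 1))
          (α * (α - (1 + normSq (z o))) * nsq' z ^ (α - 2)) (fun i => tail i * z i) *
        (shear o (fun i => α / nsq' z * starRingEnd ℂ (tail i * z i) * z o)).conjTranspose := by
  ext i j
  rw [cHess_model o α z hz, shear_conj_apply]
  have ht : ∀ k : Fin n, starRingEnd ℂ (tail k) = tail k := by
    intro k; by_cases h : (k : ℕ) = 0 <;> simp [tail, h]
  have ht1 : ∀ k : Fin n, k ≠ o → tail k = 1 := by
    intro k hk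
    have : (k : ℕ) ≠ 0 := fun h => hk (Fin.ext (h.trans ho.symm))
    simp [tail, this]
  have h1 : nsq' z ^ (α - 1) = nsq' z * nsq' z ^ (α - 2) := by
    rw [show α - 1 = 1 + (α - 2) by ring, Real.rpow_add hz, Real.rpow_one]
  have h0 : nsq' z ^ α = nsq' z * (nsq' z * nsq' z ^ (α - 2)) := by
    rw [← h1, show α = 1 + (α - 1) by ring, Real.rpow_add hz, Real.rpow_one]; ring_nf
  rw [h0, h1]
  generalize nsq' z ^ (α - 2) = S
  have hs : (nsq' z : ℂ) ≠ 0 := ofReal_ne_zero.2 hz.ne'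
  by_cases hi : i = o <;> by_cases hj : j = o
  · subst hi; subst hj
    simp [diagRankOne, tail_zero ho]
  · subst hi
    simp [diagRankOne, tail_zero ho, ht1 j hj, hj, Ne.symm hj]
    field_simp
  · subst hj
    simp [diagRankOne, tail_zero ho, ht1 i hi, hi, Ne.symm hi]
    field_simp
  · simp [diagRankOne, tail_zero ho, ht1 i hi, ht1 j hj, hi, Ne.symm hi, Ne.symm hj,
      normSq_eq_conj_mul_self]
    by_cases hij : i = j
    · subst hij
      simp
      field_simp
      ring
    · simp [hij, Ne.symm hij]
      field_simp
      ring

/-- The determinant of the diagonal plus rank-one factor is free of `s` because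
`α + (α - 1)(n - 1) = 0`. -/
theorem det_value (n : ℕ) (hn : 2 ≤ n) (s c : ℝ) (hs : 0 < s) (hc : c ≠ 0) (α : ℝ)
    (hα : α = 1 - 1 / (n : ℝ)) (hα0 : α ≠ 0) :
    s ^ α * (α * c * s ^ (α - 1)) ^ (n - 1) *
      (1 + α * (α - c) * s ^ (α - 2) * (s / (α * c * s ^ (α - 1)))) = α ^ n * c ^ (n - 2) := by
  have h1 : s ^ (α - 1) = s * s ^ (α - 2) := by
    rw [show α - 1 = 1 + (α - 2) by ring, Real.rpow_add hs, Real.rpow_one]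
  have hfac : 1 + α * (α - c) * s ^ (α - 2) * (s / (α * c * s ^ (α - 1))) = α / c := by
    have : s ^ (α - 2) ≠ 0 := (Real.rpow_pos_of_pos hs _).ne'
    rw [h1]
    field_simp
    ring
  have hexp : s ^ α * (s ^ (α - 1)) ^ (n - 1) = 1 := by
    rw [← Real.rpow_natCast, ← Real.rpow_mul hs.le, ← Real.rpow_add hs,
      Nat.cast_sub (by omega : 1 ≤ n)]
    have hn0 : (n : ℝ) ≠ 0 := by positivity
    rw [show α + (α - 1) * ((n : ℝ) - (1 : ℕ)) = 0 by rw [hα]; push_cast; field_simp; ring,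
      Real.rpow_zero]
  obtain ⟨m, rfl⟩ := Nat.exists_eq_add_of_le hn
  rw [hfac, mul_pow, mul_pow]
  rw [show 2 + m - 1 = m + 1 by omega] at hexp ⊢
  rw [show 2 + m - 2 = m by omega]
  calc _ = (s ^ α * (s ^ (α - 1)) ^ (m + 1)) * (α ^ (m + 1) * c ^ (m + 1) * (α / c)) := by ring
    _ = _ := by
      rw [hexp]
      field_simp
      ring

open scoped ComplexOrder in
/-- Błocki's example: for `n ≥ 2` and `u(z) = ‖z'‖^{2(1-1/n)}(1+|z₁|²)`, at every point
with `z' ≠ 0` the function `u` is smooth, its complex Hessian is positive definite, and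
`det(D²u) = (1-1/n)^n (1+|z₁|²)^{n-2}`. -/
theorem stmt9 (n : ℕ) (hn : 2 ≤ n)
    (u : (Fin n → ℂ) → ℂ)
    (hu : ∀ z, u z = ((nsq' z ^ (1 - 1 / (n : ℝ)) * (1 + Complex.normSq (z ⟨0, by omega⟩)) : ℝ) : ℂ))
    (z : Fin n → ℂ) (hz : ∃ j : Fin n, (j : ℕ) ≠ 0 ∧ z j ≠ 0) :
    ContDiffAt ℝ (⊤ : ℕ∞) u z ∧ (cHess u z).PosDef ∧
      (cHess u z).det =
        (((1 - 1 / (n : ℝ)) ^ n * (1 + Complex.normSq (z ⟨0, by omega⟩)) ^ (n - 2) : ℝ) : ℂ) := by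
  have hs := nsq_pos hz
  obtain rfl : u = _ := funext hu
  have hn2 : (2 : ℝ) ≤ n := by exact_mod_cast hn
  have hlt : 1 / (n : ℝ) < 1 := by rw [div_lt_one (by linarith)]; linarith
  have hgt : 0 < 1 / (n : ℝ) := by positivity
  refine ⟨?_, ?_⟩
  · have hsq : ∀ k : Fin n, ContDiff ℝ (⊤ : ℕ∞) fun w : Fin n → ℂ => normSq (w k) := by
      intro k
      simp only [normSq_apply]
      have hre : ContDiff ℝ (⊤ : ℕ∞) fun w : Fin n → ℂ => (w k).re :=
        reCLM.contDiff.comp (contDiff_apply ℝ ℂ k)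
      have him : ContDiff ℝ (⊤ : ℕ∞) fun w : Fin n → ℂ => (w k).im :=
        imCLM.contDiff.comp (contDiff_apply ℝ ℂ k)
      exact (hre.mul hre).add (him.mul him)
    have hnsq : ContDiff ℝ (⊤ : ℕ∞) fun w : Fin n → ℂ => nsq' w :=
      ContDiff.sum fun k _ => hsq k
    exact ofRealCLM.contDiff.contDiffAt.comp z
      ((hnsq.contDiffAt.rpow_const_of_ne hs.ne').mul
        (contDiffAt_const.add (hsq _).contDiffAt))
  · generalize ho' : (⟨0, by omega⟩ : Fin n) = o
    have ho : (o : ℕ) = 0 := by rw [← ho']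
    generalize hα : 1 - 1 / (n : ℝ) = α
    have hα0 : 0 < α := by linarith
    have hα1 : α < 1 := by linarith
    have hc1 : 0 ≤ normSq (z o) := normSq_nonneg _
    rw [cHess_factor o ho α z hs]
    have hdet := det_shear o (fun i => α / nsq' z * starRingEnd ℂ (tail i * z i) * z o)
      (by simp [tail_zero ho])
    have hS := fun β => Real.rpow_pos_of_pos hs β
    have h1 : nsq' z ^ (α - 1) = nsq' z * nsq' z ^ (α - 2) := by
      rw [show α - 1 = 1 + (α - 2) by ring, Real.rpow_add hs, Real.rpow_one]
    constructor
    · refine (posDef_diagRankOne o _ _ _ (by simp [tail_zero ho])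
        ?_ ?_ ?_).mul_mul_conjTranspose_same ?_
      · exact mul_nonpos_of_nonpos_of_nonneg
          (mul_nonpos_of_nonneg_of_nonpos hα0.le (by linarith)) (hS _).le
      · simpa using hS α
      · intro i hi
        rw [sum_normSq_tail, if_neg hi, h1]
        -- With `c = 1 + |z₁|²`, the sum `α c s ^ (α-1) + b s` equals `α² s ^ (α-1)`.
        have : 0 < α ^ 2 * (nsq' z * nsq' z ^ (α - 2)) := by have := hS (α - 2); positivity
        linarith
      · rw [Matrix.vecMul_injective_iff_isUnit, Matrix.isUnit_iff_isUnit_det, hdet]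
        exact isUnit_one
    · rw [Matrix.det_mul, Matrix.det_mul, Matrix.det_conjTranspose, hdet, star_one, one_mul, mul_one,
        det_diagRankOne]
      · congr 1
        rw [← det_value n hn (nsq' z) (1 + normSq (z o)) hs (by positivity) α hα.symm hα0.ne']
        congr 1
        · rw [← Finset.mul_prod_erase _ _ (Finset.mem_univ o), if_pos rfl]
          congr 1
          rw [Finset.prod_congr rfl fun i hi => if_neg (Finset.ne_of_mem_erase hi)]
          simp
        · congr 2
          rw [← sum_normSq_tail z, Finset.sum_div]
          refine Finset.sum_congr rfl fun i _ => ?_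
          by_cases hi : i = o
          · subst hi; simp [tail_zero ho]
          · rw [if_neg hi, sum_normSq_tail]
      · intro i
        have := hS (α - 1)
        have := hS α
        split_ifs <;> positivity
end

section
/- Let n ≥ 2 and u(z) = ‖z'‖^{2(1−1/n)}(1 + |z₁|²) on ℂ^n. Then u belongs to the Sobolev space W^{2,r}_{loc}(ℂ^n) (identifying ℂ^n with ℝ^{2n}) for every 1 ≤ r < n(n−1). -/
/-!
Write `s = nsq' z = ‖z'‖²`, `q = 1 + |z₁|²`, `a = 1 - 1/n`, so that `u = s ^ a * q`.
For `ε > 0` the regularization `(s + ε) ^ a * q` is smooth, so integration by parts against a test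
function is legitimate, and the weak derivatives of `u` come from letting `ε → 0⁺`.

The passage to the limit is dominated convergence (`limit_aux`). Up to second order, every
derivative of `(s + ε) ^ a * q` is bounded, uniformly in `0 ≤ ε ≤ 1`, by a continuous function times
`s ^ (-(1 - a)) = ‖z'‖ ^ (-2/n)` wherever `s > 0`. The only delicate term is
`(s + ε) ^ (a - 2) * ∂_v s * ∂_w s`, for which one uses `(∂_v s)² ≤ 4 ‖v'‖² s`
(`fderiv_nsq'_sq_le`). The same bound at `ε = 0` shows that the limits are locally `r`-integrable,
as soon as `s ^ (-p)` is locally integrable for `0 ≤ p < n - 1`: here `p = (1 - a) r = r / n`, and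
`p < n - 1` is exactly `r < n (n - 1)`.

The local integrability of `s ^ (-p)` (`integrableOn_nsq'_rpow`) needs no polar coordinates on
`ℂ^(n-1)`: since `|z_j|² ≤ s` for each of the `n - 1` coordinates of `z'`, one has
`s ^ (-p) ≤ ∏ |z_j| ^ (-2p/(n-1))`, a product of functions of one complex variable which are locally
integrable because `2p/(n-1) < 2`.
-/

open MeasureTheory

/-- A function `f : ℂ^n → ℝ` is locally `r`-integrable. -/
def LocLr {n : ℕ} (r : ℝ) (f : (Fin n → ℂ) → ℝ) : Prop :=
  ∀ K : Set (Fin n → ℂ), IsCompact K → IntegrableOn (fun z => |f z| ^ r) K volume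

open Filter Topology

lemma nsq'_nonneg {n : ℕ} (z : Fin n → ℂ) : 0 ≤ nsq' z :=
  Finset.sum_nonneg fun _ _ => Complex.normSq_nonneg _

lemma contDiff_normSq_apply {n : ℕ} (j : Fin n) :
    ContDiff ℝ (⊤ : ℕ∞) (fun z : Fin n → ℂ => Complex.normSq (z j)) := by
  simp only [Complex.normSq_eq_norm_sq]
  exact (contDiff_apply ℝ ℂ j).norm_sq ℝ

lemma contDiff_nsq' {n : ℕ} : ContDiff ℝ (⊤ : ℕ∞) (nsq' (n := n)) := by
  unfold nsq'
  exact ContDiff.sum fun j _ => contDiff_normSq_apply j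

lemma ae_coord_ne_zero {n : ℕ} : ∀ᵐ z : Fin n → ℂ, ∀ j, z j ≠ 0 := by
  rw [ae_all_iff]
  intro j
  have := Measure.pi_hyperplane (fun _ : Fin n => (volume : Measure ℂ)) j 0
  rw [ae_iff]
  simpa [volume_pi] using this

lemma normSq_le_nsq' {n : ℕ} (z : Fin n → ℂ) {j : Fin n} (hj : (j : ℕ) ≠ 0) :
    Complex.normSq (z j) ≤ nsq' z :=
  Finset.single_le_sum (f := fun j => Complex.normSq (z j))
    (fun _ _ => Complex.normSq_nonneg _) (by simpa using hj)

lemma ae_nsq'_pos {n : ℕ} (hn : 2 ≤ n) : ∀ᵐ z : Fin n → ℂ, 0 < nsq' z := by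
  filter_upwards [ae_coord_ne_zero] with z hz
  exact (Complex.normSq_pos.2 (hz ⟨1, by omega⟩)).trans_le (normSq_le_nsq' z (by simp))

/-- The gradient of a nonnegative quadratic form is controlled by the square root of the form:
`t ↦ nsq' (z + t v)` is a nonnegative quadratic polynomial, so its discriminant is `≤ 0`. -/
lemma fderiv_nsq'_sq_le {n : ℕ} (z v : Fin n → ℂ) :
    (fderiv ℝ nsq' z v) ^ 2 ≤ 4 * nsq' v * nsq' z := by
  have key : ∀ t : ℝ, nsq' (z + t • v) = nsq' z +
      t * (∑ j ∈ Finset.univ.filter (fun j : Fin n => (j : ℕ) ≠ 0),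
        2 * ((z j).re * (v j).re + (z j).im * (v j).im)) + t ^ 2 * nsq' v := by
    intro t
    simp only [nsq', Finset.mul_sum, ← Finset.sum_add_distrib]
    refine Finset.sum_congr rfl fun j _ => ?_
    simp [Complex.normSq_apply]
    ring
  set b := ∑ j ∈ Finset.univ.filter (fun j : Fin n => (j : ℕ) ≠ 0),
        2 * ((z j).re * (v j).re + (z j).im * (v j).im)
  have h1 : HasDerivAt (fun t : ℝ => nsq' (z + t • v)) (fderiv ℝ nsq' z v) 0 :=
    ((contDiff_nsq'.differentiable (by simp)) z).hasFDerivAt.hasLineDerivAt v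
  have h2 : HasDerivAt (fun t : ℝ => nsq' (z + t • v)) b 0 := by
    simp only [key]
    have := (((hasDerivAt_id (0 : ℝ)).mul_const b).const_add (nsq' z)).add
      (((hasDerivAt_id (0 : ℝ)).pow 2).mul_const (nsq' v))
    convert! this using 1
    simp
  rw [h1.unique h2]
  have := discrim_le_zero (a := nsq' v) (b := b) (c := nsq' z) (fun t => by
    have := nsq'_nonneg (z + t • v)
    rw [key] at this
    linarith)
  unfold discrim at this
  linarith

lemma card_coords {n : ℕ} (hn : 2 ≤ n) :
    ((Finset.univ.filter (fun j : Fin n => (j : ℕ) ≠ 0)).card : ℝ) = n - 1 := by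
  have : Finset.univ.filter (fun j : Fin n => (j : ℕ) ≠ 0) =
      Finset.univ.erase (⟨0, by omega⟩ : Fin n) := by
    ext j; simp [Fin.ext_iff]
  rw [this, Finset.card_erase_of_mem (Finset.mem_univ _), Finset.card_univ, Fintype.card_fin,
    Nat.cast_sub (by omega)]
  simp

/-- `‖z'‖ ^ (-2p)` is locally integrable for `p < n - 1`, by comparison with the product of the
`|z_j| ^ (-2p/(n-1))` over the coordinates of `z'`. -/
lemma integrableOn_nsq'_rpow {n : ℕ} (hn : 2 ≤ n) {p : ℝ} (hp0 : 0 ≤ p) (hp : p < n - 1)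
    {K : Set (Fin n → ℂ)} (hK : IsCompact K) :
    IntegrableOn (fun z => nsq' z ^ (-p)) K volume := by
  obtain ⟨R, hR0, hR⟩ := hK.isBounded.exists_pos_norm_lt
  have hn' : (0 : ℝ) < n - 1 := by
    have : (2 : ℝ) ≤ n := by exact_mod_cast hn
    linarith
  set α : ℝ := 2 * (p / (n - 1)) with hα
  have hα0 : 0 ≤ α := by positivity
  have hα2 : α < 2 := by
    have : p / (n - 1) < 1 := (div_lt_one hn').2 hp
    linarith
  -- The exponent is `0` on the first coordinate, which does not enter `nsq'`.
  let β : Fin n → ℝ := fun j => if (j : ℕ) ≠ 0 then α else 0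
  let f : Fin n → ℂ → ℝ := fun j => (Metric.ball (0 : ℂ) R).indicator (fun w => ‖w‖ ^ (-β j))
  have hf : ∀ j, Integrable (f j) volume := by
    intro j
    refine IntegrableOn.integrable_indicator ?_ measurableSet_ball
    refine integrableOn_ball_of_norm_le_rpow (C := 1) (α := β j) (by simp) ?_
      (Eventually.of_forall fun w => ?_)
      (measurable_norm.pow_const _).aestronglyMeasurable
    · simp only [Complex.finrank_real_complex, β]
      split_ifs <;> simp [hα2]
    · rw [one_mul, Real.norm_of_nonneg (by positivity)]
  have hprod : Integrable (fun z : Fin n → ℂ => ∏ j, f j (z j)) volume :=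
    Integrable.fintype_prod hf
  refine Integrable.mono' hprod.integrableOn ?_ ?_
  · exact (contDiff_nsq'.continuous.measurable.pow_const _).aestronglyMeasurable
  · filter_upwards [ae_restrict_of_ae ae_coord_ne_zero,
      ae_restrict_mem₀ hK.measurableSet.nullMeasurableSet] with z hz hzK
    rw [Real.norm_of_nonneg (Real.rpow_nonneg (nsq'_nonneg z) _)]
    have hfz : ∀ j, f j (z j) = ‖z j‖ ^ (-β j) := fun j =>
      Set.indicator_of_mem (by
        rw [mem_ball_zero_iff]; exact (norm_le_pi_norm z j).trans_lt (hR z hzK)) _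
    have hb : ∏ j, f j (z j) =
        ∏ j ∈ Finset.univ.filter (fun j : Fin n => (j : ℕ) ≠ 0), ‖z j‖ ^ (-α) := by
      rw [Finset.prod_filter]
      refine Finset.prod_congr rfl fun j _ => ?_
      rw [hfz]
      simp only [β]
      split_ifs <;> simp
    have ha : nsq' z ^ (-p) = ∏ j ∈ Finset.univ.filter (fun j : Fin n => (j : ℕ) ≠ 0),
        nsq' z ^ (-(p / (n - 1))) := by
      rw [Finset.prod_const, ← Real.rpow_natCast, ← Real.rpow_mul (nsq'_nonneg z), card_coords hn]
      congr 1
      field_simp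
    rw [hb, ha]
    refine Finset.prod_le_prod (fun _ _ => Real.rpow_nonneg (nsq'_nonneg z) _) fun j hj => ?_
    have hj' : (j : ℕ) ≠ 0 := by simpa using hj
    have h1 := Real.rpow_le_rpow_of_nonpos (Complex.normSq_pos.2 (hz j)) (normSq_le_nsq' z hj')
      (z := -(p / (n - 1))) (by
        have : 0 ≤ p / (n - 1) := by positivity
        linarith)
    refine h1.trans (le_of_eq ?_)
    rw [Complex.normSq_eq_norm_sq, ← Real.rpow_natCast, ← Real.rpow_mul (norm_nonneg _)]
    congr 1
    rw [hα]; push_cast; ring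

/-- A family `F ε` converging to `F 0` off `{z' = 0}` and dominated there by a continuous function
times `nsq' ^ (-p)` has a locally `r`-integrable limit, and converges to it weakly against
continuous compactly supported functions. -/
lemma limit_aux {n : ℕ} (hn : 2 ≤ n) {r p : ℝ} (hr : 0 ≤ r) (hp0 : 0 ≤ p) (hp : p < n - 1)
    (hpr : p * r < n - 1) {F : ℝ → (Fin n → ℂ) → ℝ} {M : (Fin n → ℂ) → ℝ} (hM : Continuous M)
    (hF : ∀ ε, Measurable (F ε))
    (hlim : ∀ z, 0 < nsq' z → Tendsto (fun ε => F ε z) (𝓝[>] 0) (𝓝 (F 0 z)))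
    (hbd : ∀ ε, 0 ≤ ε → ε ≤ 1 → ∀ z, 0 < nsq' z → |F ε z| ≤ M z * nsq' z ^ (-p)) :
    LocLr r (F 0) ∧ ∀ φ : (Fin n → ℂ) → ℝ, Continuous φ → HasCompactSupport φ →
      Tendsto (fun ε => ∫ z, F ε z * φ z) (𝓝[>] 0) (𝓝 (∫ z, F 0 z * φ z)) := by
  constructor
  · intro K hK
    obtain ⟨C, hC⟩ := hK.exists_bound_of_continuousOn hM.continuousOn
    refine Integrable.mono' ((integrableOn_nsq'_rpow hn (mul_nonneg hp0 hr) hpr hK).const_mul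
      (|C| ^ r)) ?_ ?_
    · exact ((hF 0).norm.pow_const r).aestronglyMeasurable
    · filter_upwards [ae_restrict_of_ae (ae_nsq'_pos hn),
        ae_restrict_mem₀ hK.measurableSet.nullMeasurableSet] with z hz hzK
      rw [Real.norm_of_nonneg (Real.rpow_nonneg (abs_nonneg _) _), neg_mul_eq_neg_mul,
        Real.rpow_mul hz.le, ← Real.mul_rpow (abs_nonneg _) (Real.rpow_nonneg hz.le _)]
      refine Real.rpow_le_rpow (abs_nonneg _) ((hbd 0 le_rfl zero_le_one z hz).trans ?_) hr
      refine mul_le_mul_of_nonneg_right ?_ (Real.rpow_nonneg hz.le _)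
      exact (le_abs_self _).trans ((hC z hzK).trans (le_abs_self _))
  · intro φ hφ hφc
    refine tendsto_integral_filter_of_dominated_convergence
      (fun z => |M z * φ z| * nsq' z ^ (-p)) ?_ ?_ ?_ ?_
    · exact Eventually.of_forall fun ε => ((hF ε).mul hφ.measurable).aestronglyMeasurable
    · filter_upwards [Ioc_mem_nhdsGT (zero_lt_one' ℝ)] with ε hε
      filter_upwards [ae_nsq'_pos hn] with z hz
      rw [norm_mul, Real.norm_eq_abs, Real.norm_eq_abs, abs_mul, mul_right_comm]
      refine mul_le_mul_of_nonneg_right ((hbd ε hε.1.le hε.2 z hz).trans ?_) (abs_nonneg _)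
      exact mul_le_mul_of_nonneg_right (le_abs_self _) (Real.rpow_nonneg hz.le _)
    · have hcs : Function.support (fun z => |M z * φ z| * nsq' z ^ (-p)) ⊆ tsupport φ := by
        intro z hz
        refine subset_tsupport _ ?_
        intro h0
        exact hz (by simp [h0])
      rw [← integrableOn_iff_integrable_of_support_subset hcs]
      exact (integrableOn_nsq'_rpow hn hp0 hp hφc).continuousOn_mul
        (by fun_prop) hφc
    · filter_upwards [ae_nsq'_pos hn] with z hz
      exact (hlim z hz).mul_const _

/-- Integration by parts against a compactly supported `C¹` function. -/
lemma ibp_aux {n : ℕ} {F ψ : (Fin n → ℂ) → ℝ} (v : Fin n → ℂ) (hF : ContDiff ℝ 1 F)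
    (hψ : ContDiff ℝ 1 ψ) (hc : HasCompactSupport ψ) :
    ∫ z, F z * fderiv ℝ ψ z v = -∫ z, fderiv ℝ F z v * ψ z := by
  have c1 : Continuous (fun z => fderiv ℝ F z v) :=
    (hF.continuous_fderiv (by simp)).clm_apply continuous_const
  have c2 : Continuous (fun z => fderiv ℝ ψ z v) :=
    (hψ.continuous_fderiv (by simp)).clm_apply continuous_const
  refine integral_mul_fderiv_eq_neg_fderiv_mul_of_integrable ?_ ?_ ?_
    (fun x _ => (hF.differentiable (by simp)) x) (fun x _ => (hψ.differentiable (by simp)) x)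
  · exact (c1.mul hψ.continuous).integrable_of_hasCompactSupport hc.mul_left
  · exact (hF.continuous.mul c2).integrable_of_hasCompactSupport (hc.fderiv_apply ℝ v).mul_left
  · exact (hF.continuous.mul hψ.continuous).integrable_of_hasCompactSupport hc.mul_left

lemma contDiff_reg {n : ℕ} {ε : ℝ} (hε : 0 < ε) (b : ℝ) {f : (Fin n → ℂ) → ℝ}
    (hf : ContDiff ℝ (⊤ : ℕ∞) f) :
    ContDiff ℝ (⊤ : ℕ∞) (fun z => (nsq' z + ε) ^ b * f z) :=
  ((contDiff_nsq'.add contDiff_const).rpow_const_of_ne fun z =>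
    (add_pos_of_nonneg_of_pos (nsq'_nonneg z) hε).ne').mul hf

lemma fderiv_reg {n : ℕ} {ε : ℝ} (hε : 0 < ε) (b : ℝ) {f : (Fin n → ℂ) → ℝ}
    (hf : ContDiff ℝ (⊤ : ℕ∞) f) (z v : Fin n → ℂ) :
    fderiv ℝ (fun z => (nsq' z + ε) ^ b * f z) z v =
      (nsq' z + ε) ^ (b - 1) * (b * fderiv ℝ nsq' z v * f z) +
        (nsq' z + ε) ^ b * fderiv ℝ f z v := by
  have h1 : HasFDerivAt nsq' (fderiv ℝ nsq' z) z :=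
    ((contDiff_nsq'.differentiable (by simp)) z).hasFDerivAt
  have h2 : HasFDerivAt f (fderiv ℝ f z) z := ((hf.differentiable (by simp)) z).hasFDerivAt
  have h3 := ((h1.add_const ε).rpow_const (p := b)
    (Or.inl (add_pos_of_nonneg_of_pos (nsq'_nonneg z) hε).ne')).mul h2
  have h4 : fderiv ℝ (fun z => (nsq' z + ε) ^ b * f z) z = _ := h3.fderiv
  rw [h4]
  simp
  ring

lemma contDiff_dir {n : ℕ} {f : (Fin n → ℂ) → ℝ} (hf : ContDiff ℝ (⊤ : ℕ∞) f) (v : Fin n → ℂ) :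
    ContDiff ℝ (⊤ : ℕ∞) (fun z => fderiv ℝ f z v) :=
  (hf.fderiv_right (m := (⊤ : ℕ∞)) (by simp)).clm_apply contDiff_const

lemma tendsto_reg {s : ℝ} (hs : 0 < s) (b c : ℝ) :
    Tendsto (fun ε : ℝ => (s + ε) ^ b * c) (𝓝[>] 0) (𝓝 ((s + 0) ^ b * c)) := by
  have : ContinuousAt (fun ε : ℝ => (s + ε) ^ b * c) 0 :=
    ((continuousAt_const.add continuousAt_id).rpow_const
      (Or.inl (by simpa using hs.ne'))).mul_const c
  exact this.tendsto.mono_left nhdsWithin_le_nhds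

lemma reg_bound_sub_one {s ε a : ℝ} (hs : 0 < s) (hε : 0 ≤ ε) (ha : a ≤ 1) (c : ℝ) :
    |(s + ε) ^ (a - 1) * c| ≤ |c| * s ^ (-(1 - a)) := by
  rw [abs_mul, abs_of_nonneg (Real.rpow_nonneg (by linarith) _), mul_comm, neg_sub]
  exact mul_le_mul_of_nonneg_left
    (Real.rpow_le_rpow_of_nonpos hs (by linarith) (by linarith)) (abs_nonneg _)

lemma reg_bound {s ε a : ℝ} (hs : 0 < s) (hε : 0 ≤ ε) (hε1 : ε ≤ 1) (ha : a ≤ 1) (c : ℝ) :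
    |(s + ε) ^ a * c| ≤ ((s + 1) * |c|) * s ^ (-(1 - a)) := by
  have h : (s + ε) ^ a * c = (s + ε) ^ (a - 1) * ((s + ε) * c) := by
    rw [Real.rpow_sub_one (by linarith)]
    field_simp
  rw [h]
  refine (reg_bound_sub_one hs hε ha _).trans ?_
  refine mul_le_mul_of_nonneg_right ?_ (Real.rpow_nonneg hs.le _)
  rw [abs_mul, abs_of_nonneg (by linarith : 0 ≤ s + ε)]
  exact mul_le_mul_of_nonneg_right (by linarith) (abs_nonneg _)

/-- The most singular terms: `x` and `y` stand for first derivatives of `s`, whose squares are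
`O(s)`, so that their product compensates one power of `s + ε`. -/
lemma reg_bound_sub_two {s ε a x y A B : ℝ} (hs : 0 < s) (hε : 0 ≤ ε) (ha : a ≤ 1)
    (hx : x ^ 2 ≤ A * s) (hy : y ^ 2 ≤ B * s) (c : ℝ) :
    |(s + ε) ^ (a - 1 - 1) * (x * y * c)| ≤ ((A + B) * |c|) * s ^ (-(1 - a)) := by
  have h : (s + ε) ^ (a - 1 - 1) * (x * y * c) = (s + ε) ^ (a - 1) * (x * y * c / (s + ε)) := by
    rw [Real.rpow_sub_one (by linarith)]
    field_simp
  rw [h]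
  refine (reg_bound_sub_one hs hε ha _).trans ?_
  refine mul_le_mul_of_nonneg_right ?_ (Real.rpow_nonneg hs.le _)
  rw [abs_div, abs_of_pos (by linarith : 0 < s + ε), div_le_iff₀ (by linarith), abs_mul,
    mul_right_comm]
  refine mul_le_mul_of_nonneg_right ?_ (abs_nonneg _)
  have hAB : 0 ≤ A + B := by
    by_contra! hneg
    nlinarith [sq_nonneg x, sq_nonneg y]
  have : |x * y| ≤ (A + B) * s := by
    rw [abs_le]
    constructor <;> nlinarith [sq_nonneg (x + y), sq_nonneg (x - y), sq_nonneg x, sq_nonneg y]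
  nlinarith

/-- For `n ≥ 2`, the function `u(z) = ‖z'‖^{2(1-1/n)}(1+|z₁|²)` belongs to
`W^{2,r}_loc(ℂ^n)` for every `1 ≤ r < n(n-1)`: `u` is locally `r`-integrable and its
first and second distributional derivatives (in every real direction) are represented by
locally `r`-integrable functions. -/
theorem stmt10 (n : ℕ) (hn : 2 ≤ n)
    (u : (Fin n → ℂ) → ℝ)
    (hu : ∀ z, u z = nsq' z ^ (1 - 1 / (n : ℝ)) * (1 + Complex.normSq (z ⟨0, by omega⟩)))
    (r : ℝ) (hr1 : 1 ≤ r) (hr2 : r < n * (n - 1)) :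
    LocLr r u ∧
    (∀ v : Fin n → ℂ, ∃ g : (Fin n → ℂ) → ℝ, LocLr r g ∧
      ∀ ψ : (Fin n → ℂ) → ℝ, ContDiff ℝ (⊤ : ℕ∞) ψ → HasCompactSupport ψ →
        ∫ z, u z * fderiv ℝ ψ z v = -∫ z, g z * ψ z) ∧
    (∀ v w : Fin n → ℂ, ∃ g : (Fin n → ℂ) → ℝ, LocLr r g ∧
      ∀ ψ : (Fin n → ℂ) → ℝ, ContDiff ℝ (⊤ : ℕ∞) ψ → HasCompactSupport ψ →
        ∫ z, u z * fderiv ℝ (fun y => fderiv ℝ ψ y v) z w = ∫ z, g z * ψ z) := by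
  have hn2 : (2 : ℝ) ≤ n := by exact_mod_cast hn
  obtain ⟨a, ha⟩ : ∃ a : ℝ, a = 1 - 1 / (n : ℝ) := ⟨_, rfl⟩
  have hp : 1 - a = 1 / n := by rw [ha]; ring
  have hp0 : 0 ≤ 1 - a := by rw [hp]; positivity
  have ha1 : a ≤ 1 := by linarith
  have hpr : (1 - a) * r < n - 1 := by
    rw [hp, one_div_mul_eq_div, div_lt_iff₀ (by linarith)]
    linarith
  have hp1 : 1 - a < n - 1 := by nlinarith
  have hr0 : 0 ≤ r := by linarith
  obtain ⟨q, hq⟩ : ∃ q : (Fin n → ℂ) → ℝ,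
    q = fun z => 1 + Complex.normSq (z ⟨0, by omega⟩) := ⟨_, rfl⟩
  have hqs : ContDiff ℝ (⊤ : ℕ∞) q := by
    rw [hq]; exact contDiff_const.add (contDiff_normSq_apply _)
  have hs := contDiff_nsq' (n := n)
  have hsc := hs.continuous
  have hsm := hsc.measurable
  have hm : ∀ (ε b : ℝ) {f : (Fin n → ℂ) → ℝ}, ContDiff ℝ (⊤ : ℕ∞) f →
      Measurable (fun z => (nsq' z + ε) ^ b * f z) := fun ε b f hf =>
    ((hsm.add_const ε).pow_const b).mul hf.continuous.measurable
  -- For `ε > 0`, `U ε` is the regularization of `u`, `D v ε` its derivative along `v`, and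
  -- `H v w ε` the derivative of `D v ε` along `w`. At `ε = 0` they are `u` and its weak derivatives.
  let U : ℝ → (Fin n → ℂ) → ℝ := fun ε z => (nsq' z + ε) ^ a * q z
  let f1 : (Fin n → ℂ) → (Fin n → ℂ) → ℝ := fun v z => a * fderiv ℝ nsq' z v * q z
  let f2 : (Fin n → ℂ) → (Fin n → ℂ) → ℝ := fun v z => fderiv ℝ q z v
  have hf1 : ∀ v, ContDiff ℝ (⊤ : ℕ∞) (f1 v) := fun v =>
    (contDiff_const.mul (contDiff_dir hs v)).mul hqs
  have hf2 : ∀ v, ContDiff ℝ (⊤ : ℕ∞) (f2 v) := fun v => contDiff_dir hqs v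
  let D : (Fin n → ℂ) → ℝ → (Fin n → ℂ) → ℝ := fun v ε z =>
    (nsq' z + ε) ^ (a - 1) * f1 v z + (nsq' z + ε) ^ a * f2 v z
  let H : (Fin n → ℂ) → (Fin n → ℂ) → ℝ → (Fin n → ℂ) → ℝ := fun v w ε z =>
    ((nsq' z + ε) ^ (a - 1 - 1) * ((a - 1) * fderiv ℝ nsq' z w * f1 v z) +
      (nsq' z + ε) ^ (a - 1) * fderiv ℝ (f1 v) z w) +
    ((nsq' z + ε) ^ (a - 1) * (a * fderiv ℝ nsq' z w * f2 v z) +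
      (nsq' z + ε) ^ a * fderiv ℝ (f2 v) z w)
  have hUs : ∀ ε, 0 < ε → ContDiff ℝ (⊤ : ℕ∞) (U ε) := fun ε hε => contDiff_reg hε a hqs
  have hDs : ∀ v ε, 0 < ε → ContDiff ℝ (⊤ : ℕ∞) (D v ε) := fun v ε hε =>
    (contDiff_reg hε (a - 1) (hf1 v)).add (contDiff_reg hε a (hf2 v))
  have hUD : ∀ v ε, 0 < ε → ∀ z, fderiv ℝ (U ε) z v = D v ε z := fun v ε hε z =>
    fderiv_reg hε a hqs z v
  have hDH : ∀ v w ε, 0 < ε → ∀ z, fderiv ℝ (D v ε) z w = H v w ε z := by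
    intro v w ε hε z
    have e := fderiv_fun_add
      (((contDiff_reg hε (a - 1) (hf1 v)).differentiable (by simp)) z)
      (((contDiff_reg hε a (hf2 v)).differentiable (by simp)) z)
    change fderiv ℝ (fun z => _ + _) z w = _
    rw [e, add_apply, fderiv_reg hε (a - 1) (hf1 v),
      fderiv_reg hε a (hf2 v)]
  have hU0 : u = U 0 := by
    funext z
    simp only [U, hu, add_zero, hq, ha]
  have limU := limit_aux hn hr0 hp0 hp1 hpr (F := U) (M := fun z => (nsq' z + 1) * |q z|)
    (by have := hqs.continuous; fun_prop) (fun ε => hm ε a hqs)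
    (fun z hz => tendsto_reg hz _ _) (fun ε h0 h1 z hz => reg_bound hz h0 h1 ha1 _)
  have limD : ∀ v, _ := fun v => limit_aux hn hr0 hp0 hp1 hpr (F := D v)
    (M := fun z => |f1 v z| + (nsq' z + 1) * |f2 v z|)
    (by have := (hf1 v).continuous; have := (hf2 v).continuous; fun_prop)
    (fun ε => (hm ε (a - 1) (hf1 v)).add (hm ε a (hf2 v)))
    (fun z hz => (tendsto_reg hz _ _).add (tendsto_reg hz _ _))
    (fun ε h0 h1 z hz => by
      rw [add_mul]
      exact (abs_add_le _ _).trans (add_le_add (reg_bound_sub_one hz h0 ha1 _)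
        (reg_bound hz h0 h1 ha1 _)))
  have limH : ∀ v w, _ := fun v w => limit_aux hn hr0 hp0 hp1 hpr (F := H v w)
    (M := fun z => ((4 * nsq' w + 4 * nsq' v) * |(a - 1) * a * q z| + |fderiv ℝ (f1 v) z w|) +
      (|a * fderiv ℝ nsq' z w * f2 v z| + (nsq' z + 1) * |fderiv ℝ (f2 v) z w|))
    (by
      have := (contDiff_dir (hf1 v) w).continuous
      have := (contDiff_dir (hf2 v) w).continuous
      have := (contDiff_dir hs w).continuous
      have := (hf2 v).continuous
      have := hqs.continuous
      fun_prop)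
    (fun ε => ((hm ε (a - 1 - 1) ((contDiff_const.mul (contDiff_dir hs w)).mul (hf1 v))).add
      (hm ε (a - 1) (contDiff_dir (hf1 v) w))).add
      ((hm ε (a - 1) ((contDiff_const.mul (contDiff_dir hs w)).mul (hf2 v))).add
      (hm ε a (contDiff_dir (hf2 v) w))))
    (fun z hz => ((tendsto_reg hz _ _).add (tendsto_reg hz _ _)).add
      ((tendsto_reg hz _ _).add (tendsto_reg hz _ _)))
    (fun ε h0 h1 z hz => by
      have split : ∀ A B C E S : ℝ,
          (A + B + (C + E)) * S = A * S + B * S + (C * S + E * S) := by intros; ring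
      rw [split]
      have e : (a - 1) * fderiv ℝ nsq' z w * f1 v z =
          fderiv ℝ nsq' z w * fderiv ℝ nsq' z v * ((a - 1) * a * q z) := by
        simp only [f1]; ring
      refine (abs_add_le _ _).trans (add_le_add ((abs_add_le _ _).trans (add_le_add ?_ ?_))
        ((abs_add_le _ _).trans (add_le_add ?_ ?_)))
      · rw [e]
        exact reg_bound_sub_two hz h0 ha1 (fderiv_nsq'_sq_le z w) (fderiv_nsq'_sq_le z v) _
      · exact reg_bound_sub_one hz h0 ha1 _
      · exact reg_bound_sub_one hz h0 ha1 _
      · exact reg_bound hz h0 h1 ha1 _)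
  refine ⟨hU0 ▸ limU.1, fun v => ⟨D v 0, (limD v).1, fun ψ hψ hc => ?_⟩,
    fun v w => ⟨H w v 0, (limH w v).1, fun ψ hψ hc => ?_⟩⟩
  · rw [hU0]
    refine tendsto_nhds_unique (limU.2 _ (contDiff_dir hψ v).continuous (hc.fderiv_apply ℝ v)) ?_
    refine ((limD v).2 ψ hψ.continuous hc).neg.congr' ?_
    filter_upwards [self_mem_nhdsWithin] with ε hε
    rw [ibp_aux v ((hUs ε hε).of_le (by simp)) (hψ.of_le (by simp)) hc]
    simp only [hUD v ε hε]
  · rw [hU0]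
    have hψv := contDiff_dir hψ v
    have hcv : HasCompactSupport (fun y => fderiv ℝ ψ y v) := hc.fderiv_apply ℝ v
    refine tendsto_nhds_unique (limU.2 _ (contDiff_dir hψv w).continuous
      (hcv.fderiv_apply ℝ w)) ?_
    refine ((limH w v).2 ψ hψ.continuous hc).congr' ?_
    filter_upwards [self_mem_nhdsWithin] with ε hε
    rw [ibp_aux w ((hUs ε hε).of_le (by simp)) (hψv.of_le (by simp)) hcv]
    simp only [hUD w ε hε]
    rw [ibp_aux v ((hDs w ε hε).of_le (by simp)) (hψ.of_le (by simp)) hc, neg_neg]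
    simp only [hDH w v ε hε]
end
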